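/- Let L be a prime number. For c = (c₀, …, c_{L−1}) ∈ ℂ^L, extended L-periodically (c_k = c_{k mod L}), define the L × L² matrix A_c whose columns are indexed by pairs (k, m) ∈ {0, …, L−1}² and whose entries are [A_c]_{p,(k,m)} = c_{(k−p) mod L} · e^{2πi p m / L} for p ∈ {0, …, L−1}. Then for Lebesgue-almost every c ∈ ℂ^L (identifying ℂ^L with ℝ^{2L}), every L × L submatrix of A_c is invertible. -/

import Mathlib

open MeasureTheory

lemma gabor_ae_eval_ne_zero : ∀ (n : ℕ) (P : MvPolynomial (Fin n) ℂ), P ≠ 0 →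
    ∀ᵐ x : Fin n → ℂ ∂volume, MvPolynomial.eval x P ≠ 0 := by
  intro n
  induction n with
  | zero =>
    intro P hP
    refine Filter.Eventually.of_forall fun x hx => hP ?_
    apply MvPolynomial.funext
    intro y
    rw [Subsingleton.elim y x, hx, map_zero]
  | succ n ih =>
    intro P hP
    set Q := MvPolynomial.finSuccEquiv ℂ n P with hQ
    have hQ0 : Q ≠ 0 := by
      simpa [hQ] using hP
    have h1 := ih Q.leadingCoeff (by simpa using hQ0)
    have key : ∀ᵐ z : (Fin n → ℂ) × ℂ ∂(volume.prod volume),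
        MvPolynomial.eval (Fin.cons z.2 z.1 : Fin (n+1) → ℂ) P ≠ 0 := by
      have hm : MeasurableSet {z : (Fin n → ℂ) × ℂ |
          MvPolynomial.eval (Fin.cons z.2 z.1 : Fin (n+1) → ℂ) P ≠ 0} := by
        have hc : Continuous fun z : (Fin n → ℂ) × ℂ =>
          MvPolynomial.eval (Fin.cons z.2 z.1 : Fin (n+1) → ℂ) P := by
          have h2 : Continuous fun z : (Fin n → ℂ) × ℂ => (Fin.cons z.2 z.1 : Fin (n+1) → ℂ) := by
            refine continuous_pi fun i => ?_
            refine Fin.cases ?_ (fun i => ?_) i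
            · simpa using continuous_snd
            · simpa using (show Continuous fun z : (Fin n → ℂ) × ℂ => z.1 i by fun_prop)
          exact (MvPolynomial.continuous_eval P).comp h2
        exact (isOpen_ne.preimage hc).measurableSet
      rw [Measure.ae_prod_iff_ae_ae hm]
      filter_upwards [h1] with y hy
      have hne : Polynomial.map (MvPolynomial.eval y) Q ≠ 0 := by
        intro h0
        apply hy
        have := congrArg (fun r => Polynomial.coeff r Q.natDegree) h0
        simpa [Polynomial.coeff_map] using this
      have hfin : {x : ℂ | ¬ MvPolynomial.eval (Fin.cons x y : Fin (n+1) → ℂ) P ≠ 0}.Finite := by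
        refine ((Polynomial.map (MvPolynomial.eval y) Q).roots.toFinset.finite_toSet).subset ?_
        intro x hx
        simp only [ne_eq, not_not, Set.mem_ofPred_eq] at hx
        rw [MvPolynomial.eval_eq_eval_mv_eval'] at hx
        simpa [hne] using hx
      exact hfin.measure_zero _
    have mp := (volume_preserving_piFinSuccAbove (fun _ : Fin (n+1) => ℂ) 0)
    have mp2 := (Measure.measurePreserving_swap (μ := (volume : Measure ℂ))
      (ν := (volume : Measure (Fin n → ℂ)))).comp mp
    have := mp2.quasiMeasurePreserving.ae key
    filter_upwards [this] with x hx
    convert hx using 3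
    refine funext fun i => ?_
    refine Fin.cases ?_ (fun i => ?_) i
    · simp [MeasurableEquiv.piFinSuccAbove]
    · simp [MeasurableEquiv.piFinSuccAbove, Fin.tail]

lemma gabor_theta {K ι : Type*} [CommRing K] [Fintype ι] (m : ι → ℕ) (j : ℕ) :
    ∀ (n : ℕ) (a : ι → K), j < n →
    (Polynomial.X - 1 : Polynomial K) ^ n ∣
      ∑ i, Polynomial.C (a i) * Polynomial.X ^ (m i) → ∑ i, a i * (m i : K) ^ j = 0 := by
  induction j with
  | zero =>
    intro n a hn h
    obtain ⟨q, hq⟩ := h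
    have := congrArg (Polynomial.eval 1) hq
    simpa [Polynomial.eval_finsetSum, hn.ne'] using this
  | succ j ih =>
    intro n a hn h
    have h2 := (Polynomial.pow_sub_one_dvd_derivative_of_pow_dvd h).mul_left Polynomial.X
    have := ih (n - 1) (fun i => a i * m i) (by omega) (by
      convert h2 using 1
      rw [Polynomial.derivative_sum, Finset.mul_sum]
      refine Finset.sum_congr rfl fun i _ => ?_
      rw [Polynomial.derivative_C_mul_X_pow]
      rcases Nat.eq_zero_or_pos (m i) with h0 | h0
      · simp [h0]
      · obtain ⟨r, hr⟩ := Nat.exists_eq_succ_of_ne_zero h0.ne'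
        rw [hr]
        simp [pow_succ]
        ring)
    rw [← this]
    exact Finset.sum_congr rfl fun i _ => by ring

lemma gabor_swap {L : ℕ} [NeZero L] (k : Fin L → Fin L) (σ τ : Equiv.Perm (Fin L))
    (hτ : ∀ ρ : Equiv.Perm (Fin L), ∑ p, 2 ^ (L - (k (ρ p) - p : Fin L).val)
      ≤ ∑ p, 2 ^ (L - (k (τ p) - p : Fin L).val))
    (p : Fin L) (hp : k (σ p) ≠ k (τ p))
    (h1 : ∀ p', k (σ p') ≠ k (τ p') → k (σ p) - p ≤ k (τ p') - p') : False := by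
  obtain ⟨p', hp1, hp2⟩ : ∃ p', k (τ p') = k (σ p) ∧ k (σ p') ≠ k (σ p) := by
    by_contra! hcon
    have hcard : ∀ ρ : Equiv.Perm (Fin L), (Finset.univ.filter fun p' => k (ρ p') = k (σ p)).card
        = (Finset.univ.filter fun q => k q = k (σ p)).card := by
      intro ρ
      refine Finset.card_bij (fun a _ => ρ a) ?_ ?_ ?_
      · simp
      · intro a _ b _ h
        exact ρ.injective h
      · intro b hb
        exact ⟨ρ.symm b, by simpa using hb, by simp⟩
    have hsub : (Finset.univ.filter fun p' => k (τ p') = k (σ p)) ⊆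
        (Finset.univ.filter fun p' => k (σ p') = k (σ p)) := by
      intro a
      simpa using hcon a
    have heq := Finset.eq_of_subset_of_card_le hsub (by rw [hcard, hcard])
    have : p ∈ (Finset.univ.filter fun p' => k (τ p') = k (σ p)) := by
      rw [heq]; simp
    simp at this
    exact hp this.symm
  have hne : p' ≠ p := by
    rintro rfl
    exact hp2 rfl
  have lt1 : k (σ p) - p < k (τ p) - p := by
    refine lt_of_le_of_ne (h1 p hp) fun h => hp (sub_left_injective h)
  have lt2 : k (σ p) - p < k (τ p') - p' := by
    refine lt_of_le_of_ne (h1 p' (by rw [hp1]; exact hp2)) fun h => hne ?_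
    rw [hp1] at h
    exact (sub_right_injective h).symm
  have := hτ (τ * Equiv.swap p p')
  rw [← Finset.add_sum_erase _ _ (Finset.mem_univ p),
    ← Finset.add_sum_erase _ _ (Finset.mem_erase.2 ⟨hne, Finset.mem_univ p'⟩),
    ← Finset.add_sum_erase _ (fun p => 2 ^ (L - (k (τ p) - p : Fin L).val))
      (Finset.mem_univ p),
    ← Finset.add_sum_erase _ (fun p => 2 ^ (L - (k (τ p) - p : Fin L).val))
      (Finset.mem_erase.2 ⟨hne, Finset.mem_univ p'⟩)] at this
  have hrest : ∑ x ∈ (Finset.univ.erase p).erase p',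
      2 ^ (L - (k ((τ * Equiv.swap p p') x) - x : Fin L).val)
      = ∑ x ∈ (Finset.univ.erase p).erase p', 2 ^ (L - (k (τ x) - x : Fin L).val) := by
    refine Finset.sum_congr rfl fun x hx => ?_
    simp only [Finset.mem_erase, Finset.mem_univ, and_true] at hx
    rw [Equiv.Perm.mul_apply, Equiv.swap_apply_of_ne_of_ne hx.2 hx.1]
  rw [hrest] at this
  simp only [Equiv.Perm.mul_apply, Equiv.swap_apply_left, Equiv.swap_apply_right] at this
  rw [hp1] at this lt2
  have a1 : 2 * 2 ^ (L - (k (τ p) - p : Fin L).val) ≤ 2 ^ (L - (k (σ p) - p : Fin L).val) := by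
    rw [← pow_succ']
    refine Nat.pow_le_pow_right (by norm_num) ?_
    have := (k (τ p) - p).isLt
    have : (k (σ p) - p).val < (k (τ p) - p).val := lt1
    omega
  have a2 : 2 * 2 ^ (L - (k (σ p) - p' : Fin L).val) ≤ 2 ^ (L - (k (σ p) - p : Fin L).val) := by
    rw [← pow_succ']
    refine Nat.pow_le_pow_right (by norm_num) ?_
    have := (k (σ p) - p').isLt
    have : (k (σ p) - p).val < (k (σ p) - p').val := lt2
    omega
  have a3 : 0 < 2 ^ (L - (k (τ p) - p' : Fin L).val) := by positivity
  omega

lemma gabor_unique {L : ℕ} [NeZero L] (k : Fin L → Fin L) (σ τ : Equiv.Perm (Fin L))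
    (hσ : ∀ ρ : Equiv.Perm (Fin L), ∑ p, 2 ^ (L - (k (ρ p) - p : Fin L).val)
      ≤ ∑ p, 2 ^ (L - (k (σ p) - p : Fin L).val))
    (hτ : ∀ ρ : Equiv.Perm (Fin L), ∑ p, 2 ^ (L - (k (ρ p) - p : Fin L).val)
      ≤ ∑ p, 2 ^ (L - (k (τ p) - p : Fin L).val)) (p : Fin L) : k (σ p) = k (τ p) := by
  by_contra hp
  obtain ⟨q, hq, hmin⟩ := Finset.exists_min_image (Finset.univ.filter fun p => k (σ p) ≠ k (τ p))
    (fun p => min (k (σ p) - p) (k (τ p) - p)) ⟨p, by simpa using hp⟩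
  simp only [Finset.mem_filter, Finset.mem_univ, true_and] at hq hmin
  rcases le_total (k (σ q) - q) (k (τ q) - q) with h | h
  · refine gabor_swap k σ τ hτ q hq fun p' hp' => ?_
    have := hmin p' hp'
    rw [min_eq_left h] at this
    exact this.trans (min_le_right _ _)
  · refine gabor_swap k τ σ hσ q hq.symm fun p' hp' => ?_
    have := hmin p' hp'.symm
    rw [min_eq_right h] at this
    exact this.trans (min_le_left _ _)

lemma gabor_chebotarev {L : ℕ} (hL : L.Prime) (ω : ℂ) (hω : IsPrimitiveRoot ω L)
    {ι : Type*} [Fintype ι] (a m : ι → ℕ) (ha : Function.Injective a)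
    (hm : Function.Injective m) (haL : ∀ i, a i < L) (hmL : ∀ i, m i < L) (v : ι → ℂ)
    (hv : ∀ i, ∑ j, v j * ω ^ (a i * m j) = 0) : v = 0 := by
  classical
  by_contra hv0
  have hL0 : L ≠ 0 := hL.ne_zero
  have hI : Ideal.span {(L : (⊥ : Subring ℂ))} ≠ ⊤ := by
    rw [Ne, Ideal.span_singleton_eq_top, isUnit_iff_exists_inv]
    rintro ⟨⟨b, hb⟩, h⟩
    obtain ⟨n, rfl⟩ := Subring.mem_bot.1 hb
    have h2 : (L : ℂ) * (n : ℂ) = 1 := by simpa using congrArg Subtype.val h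
    have h3 : (L : ℤ) * n = 1 := by exact_mod_cast h2
    have h4 : (L : ℤ) ∣ 1 := ⟨n, h3.symm⟩
    have h5 : L ∣ 1 := by exact_mod_cast h4
    exact hL.one_lt.ne' (Nat.dvd_one.1 h5)
  obtain ⟨V, -, hV⟩ := Ideal.image_subset_nonunits_valuationSubring _ hI
  have hLV : ((L : V) : ℂ) ∈ V.nonunits := by
    apply hV
    exact ⟨(L : (⊥ : Subring ℂ)), Ideal.subset_span rfl, by simp⟩
  rw [ValuationSubring.coe_mem_nonunits_iff] at hLV
  let K := IsLocalRing.ResidueField V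
  have hLK : (L : K) = 0 := by
    have := (IsLocalRing.residue_eq_zero_iff (L : V)).2 hLV
    simpa using this
  have : Fact L.Prime := ⟨hL⟩
  have : CharP K L := (CharP.charP_iff_prime_eq_zero hL).2 hLK
  have hωV : ω ∈ V := by
    rcases V.mem_or_inv_mem ω with h | h
    · exact h
    · have h1 : ω = (ω⁻¹) ^ (L - 1) := by
        have : ω ^ (L - 1) * ω = 1 := by
          rw [← pow_succ, Nat.sub_add_cancel hL.one_le, hω.pow_eq_one]
        rw [inv_pow]
        exact (inv_eq_of_mul_eq_one_right this).symm
      rw [h1]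
      exact pow_mem h _
  let w : V := ⟨ω, hωV⟩
  have hwL : w ^ L = 1 := Subtype.ext (by simpa [w] using hω.pow_eq_one)
  have hw1 : IsLocalRing.residue V w = 1 := by
    have h1 : (IsLocalRing.residue V w) ^ L = 1 := by rw [← map_pow, hwL, map_one]
    have h2 : (IsLocalRing.residue V w - 1) ^ L = 0 := by
      rw [sub_pow_char, h1, one_pow, sub_self]
    exact sub_eq_zero.1 (eq_zero_of_pow_eq_zero h2)
  have hne : Nonempty ι := by
    by_contra h
    rw [not_nonempty_iff] at h
    exact hv0 (Subsingleton.elim _ _)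
  obtain ⟨j0, hj0⟩ := Finite.exists_max (fun j => V.valuation (v j))
  have hvj0 : v j0 ≠ 0 := by
    intro h
    apply hv0
    funext j
    have := hj0 j
    rw [h, map_zero] at this
    simpa using this
  have huV : ∀ j, v j / v j0 ∈ V := by
    intro j
    rw [← V.valuation_le_one_iff, map_div₀]
    exact div_le_one_of_le₀ (hj0 j) zero_le
  let u : ι → V := fun j => ⟨v j / v j0, huV j⟩
  let g : Polynomial V := ∑ j, Polynomial.C (u j) * Polynomial.X ^ (m j)
  have hg : ∀ i, g.eval (w ^ a i) = 0 := by
    intro i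
    apply Subtype.ext
    have h1 : ((g.eval (w ^ a i) : V) : ℂ) = ∑ j, v j / v j0 * ω ^ (a i * m j) := by
      simp only [g, Polynomial.eval_finsetSum, Polynomial.eval_mul, Polynomial.eval_C,
        Polynomial.eval_pow, Polynomial.eval_X]
      push_cast
      refine Finset.sum_congr rfl fun j _ => ?_
      simp [u, w, pow_mul]
    rw [h1]
    have h2 : ∑ j, v j / v j0 * ω ^ (a i * m j) = (∑ j, v j * ω ^ (a i * m j)) / v j0 := by
      rw [Finset.sum_div]
      exact Finset.sum_congr rfl fun j _ => by ring
    rw [h2, hv i]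
    simp
  have hdvd : (∏ i, (Polynomial.X - Polynomial.C (w ^ a i))) ∣ g := by
    by_cases hg0 : g = 0
    · rw [hg0]; exact dvd_zero _
    have := (Multiset.prod_X_sub_C_dvd_iff_le_roots hg0
      ((Finset.univ : Finset ι).val.map fun i => w ^ a i)).2 (by
        rw [Multiset.le_iff_subset]
        · intro x hx
          obtain ⟨i, _, rfl⟩ := Multiset.mem_map.1 hx
          rw [Polynomial.mem_roots hg0]
          exact hg i
        · refine Multiset.Nodup.map ?_ Finset.univ.nodup
          intro i j hij
          apply ha
          have : ω ^ a i = ω ^ a j := by simpa [w] using congrArg Subtype.val hij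
          exact hω.pow_inj (haL i) (haL j) this)
    rw [Multiset.map_map] at this
    exact this
  have hdvd2 := Polynomial.map_dvd (IsLocalRing.residue V) hdvd
  have hdvd3 : (Polynomial.X - 1 : Polynomial K) ^ (Fintype.card ι) ∣
      ∑ j, Polynomial.C (IsLocalRing.residue V (u j)) * Polynomial.X ^ (m j) := by
    convert hdvd2 using 1
    · simp [Polynomial.map_prod, hw1, K]
    · simp [g, Polynomial.map_sum, K]
  have hth := fun i (hi : i < Fintype.card ι) => gabor_theta m i _ _ hi hdvd3
  let e := Fintype.equivFin ι
  have hz := Matrix.eq_zero_of_forall_pow_sum_mul_pow_eq_zero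
    (f := fun r => ((m (e.symm r) : ℕ) : K)) (v := fun r => IsLocalRing.residue V (u (e.symm r)))
    (by
      intro r s hrs
      apply e.symm.injective
      apply hm
      have := (CharP.natCast_eq_natCast K L).1 hrs
      exact Nat.ModEq.eq_of_lt_of_lt this (hmL _) (hmL _))
    (by
      intro i
      rw [← hth i i.2]
      exact e.symm.sum_comp fun j => IsLocalRing.residue V (u j) * (m j : K) ^ (i : ℕ))
  have h0 := congrFun hz (e j0)
  have hu1 : u j0 = 1 := Subtype.ext (by simp [u, hvj0])
  simp [hu1] at h0

lemma gabor_block {L : ℕ} (hL : L.Prime) (ω : ℂ) (hω : IsPrimitiveRoot ω L)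
    (f : Fin L → Fin L × Fin L) (hf : Function.Injective f) (σ : Equiv.Perm (Fin L)) :
    (Matrix.of fun p q : Fin L => if (f q).1 = (f (σ p)).1 then
      ω ^ ((p : ℕ) * ((f q).2 : ℕ)) else 0).det ≠ 0 := by
  classical
  intro hdet
  obtain ⟨v, hv0, hv⟩ := Matrix.exists_mulVec_eq_zero_iff.2 hdet
  apply hv0
  funext q0
  have := gabor_chebotarev hL ω hω (ι := {q : Fin L // (f q).1 = (f q0).1})
    (fun q => (σ.symm q.1 : ℕ)) (fun q => ((f q.1).2 : ℕ))
    (fun q r h => Subtype.ext (σ.symm.injective (Fin.ext h)))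
    (fun q r h => Subtype.ext (hf (Prod.ext (q.2.trans r.2.symm) (Fin.ext h))))
    (fun q => Fin.is_lt _) (fun q => Fin.is_lt _) (fun q => v q.1) (by
      intro i
      have h1 := congrFun hv (σ.symm i.1)
      simp only [Matrix.mulVec, dotProduct, Matrix.of_apply, Equiv.apply_symm_apply, i.2,
        ite_mul, zero_mul, Pi.zero_apply] at h1
      rw [← Finset.sum_filter] at h1
      rw [← h1, Finset.sum_subtype (p := fun q => (f q).1 = (f q0).1) _ (by simp)]
      exact Finset.sum_congr rfl fun j _ => mul_comm _ _)
  exact congrFun this ⟨q0, rfl⟩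

lemma gabor_exists {L : ℕ} (hL : L.Prime) (ω : ℂ) (hω : IsPrimitiveRoot ω L)
    (f : Fin L → Fin L × Fin L) (hf : Function.Injective f) :
    ∃ c : Fin L → ℂ, (Matrix.of fun p q : Fin L =>
      c ((f q).1 - p) * ω ^ ((p : ℕ) * ((f q).2 : ℕ))).det ≠ 0 := by
  classical
  have : NeZero L := ⟨hL.ne_zero⟩
  obtain ⟨σ, hσ⟩ := Finite.exists_max
    (fun ρ : Equiv.Perm (Fin L) => ∑ p, 2 ^ (L - ((f (ρ p)).1 - p : Fin L).val))
  let M : Matrix (Fin L) (Fin L) (Polynomial ℂ) := Matrix.of fun p q =>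
    Polynomial.C (ω ^ ((p : ℕ) * ((f q).2 : ℕ))) *
      Polynomial.X ^ (2 ^ (L - ((f q).1 - p : Fin L).val))
  have hcoeff : M.det.coeff (∑ p, 2 ^ (L - ((f (σ p)).1 - p : Fin L).val)) =
      (Matrix.of fun p q : Fin L => if (f q).1 = (f (σ p)).1 then
        ω ^ ((p : ℕ) * ((f q).2 : ℕ)) else 0).det := by
    rw [← Matrix.det_transpose M, ← Matrix.det_transpose (Matrix.of _), Matrix.det_apply,
      Matrix.det_apply, Polynomial.finsetSum_coeff]
    refine Finset.sum_congr rfl fun τ _ => ?_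
    rw [Polynomial.coeff_smul]
    congr 1
    simp only [Matrix.transpose_apply, M, Matrix.of_apply]
    rw [Finset.prod_mul_distrib, Finset.prod_pow_eq_pow_sum, ← map_prod,
      Polynomial.coeff_C_mul_X_pow]
    split_ifs with h
    · have huniq := gabor_unique (fun q => (f q).1) τ σ (by
        intro ρ
        rw [← h]
        exact hσ ρ) hσ
      refine Finset.prod_congr rfl fun p _ => ?_
      rw [if_pos (huniq p)]
    · symm
      have : ∃ p, (f (τ p)).1 ≠ (f (σ p)).1 := by
        by_contra! hcon
        apply h
        exact Finset.sum_congr rfl fun p _ => by rw [hcon p]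
      obtain ⟨p, hp⟩ := this
      exact Finset.prod_eq_zero (Finset.mem_univ p) (if_neg hp)
  have hM : M.det ≠ 0 := by
    intro h
    rw [h, Polynomial.coeff_zero] at hcoeff
    exact gabor_block hL ω hω f hf σ hcoeff.symm
  obtain ⟨t, ht⟩ : ∃ t, M.det.eval t ≠ 0 := by
    by_contra! hcon
    exact hM (Polynomial.funext fun t => by simpa using hcon t)
  refine ⟨fun j => t ^ (2 ^ (L - j.val)), ?_⟩
  convert ht
  rw [← Polynomial.coe_evalRingHom, RingHom.map_det]
  congr 1
  ext p q
  simp [M, mul_comm]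

theorem stmt12 (L : ℕ) (hL : Nat.Prime L) :
    ∀ᵐ c : Fin L → ℂ ∂volume, ∀ f : Fin L → Fin L × Fin L, Function.Injective f →
      IsUnit (Matrix.of fun p q : Fin L =>
        c ((f q).1 - p) *
          Complex.exp (2 * (Real.pi : ℂ) * Complex.I * ((p : ℕ) : ℂ) *
            (((f q).2 : ℕ) : ℂ) / ((L : ℕ) : ℂ))) := by
  classical
  rw [ae_all_iff]
  intro f
  by_cases hf : Function.Injective f
  swap
  · exact Filter.Eventually.of_forall fun c h => absurd h hf
  set ω := Complex.exp (2 * Real.pi * Complex.I / L) with hωdef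
  have hω : IsPrimitiveRoot ω L := Complex.isPrimitiveRoot_exp L hL.ne_zero
  have hexp : ∀ p m : ℕ, Complex.exp (2 * (Real.pi : ℂ) * Complex.I * (p : ℂ) *
            (m : ℂ) / ((L : ℕ) : ℂ)) = ω ^ (p * m) := by
    intro p m
    rw [hωdef, ← Complex.exp_nat_mul]
    congr 1
    push_cast
    ring
  let M : Matrix (Fin L) (Fin L) (MvPolynomial (Fin L) ℂ) := Matrix.of fun p q =>
    MvPolynomial.X ((f q).1 - p) * MvPolynomial.C (ω ^ ((p : ℕ) * ((f q).2 : ℕ)))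
  have heval : ∀ c : Fin L → ℂ, MvPolynomial.eval c M.det = (Matrix.of fun p q : Fin L =>
      c ((f q).1 - p) * ω ^ ((p : ℕ) * ((f q).2 : ℕ))).det := by
    intro c
    rw [RingHom.map_det]
    congr 1
    ext p q
    simp [M]
  have hM : M.det ≠ 0 := by
    obtain ⟨c, hc⟩ := gabor_exists hL ω hω f hf
    intro h
    rw [← heval, h, map_zero] at hc
    exact hc rfl
  filter_upwards [gabor_ae_eval_ne_zero L M.det hM] with c hc _
  rw [heval] at hc
  simp only [hexp]
  rw [Matrix.isUnit_iff_isUnit_det]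
  exact hc.isUnit
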